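/- arXiv:1303.3648 — 3 statements merged into one kernel-verified Lean document; each statement's English description precedes it below -/
import Mathlib

section
/- Let ν₁,…,ν_r be order functions on a ℂ-vector space V with values in ℕ, with associated multi-index filtration J(v) = {g ∈ V : ν_i(g) ≥ v_i ∀i}. Fix v ∈ ℕ^r and suppose there exists g₀ ∈ J(v) with ν_i(g₀) < ∞ for all i. For each i let w_i = min{ν_i(g) : g ∈ J(v)} (a well-defined natural number, with w_i ≥ v_i). Then there exists g ∈ J(v) with ν_i(g) = w_i for all i = 1,…,r; consequently, setting w = (w₁,…,w_r), one has w ∈ S (the set of values of the collection) and J(w) = J(v). -/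
/-!
For each `i` the elements of `J(v)` whose `i`-th value exceeds the minimum `w i` form a proper
linear subspace of `J(v)`: it is a subspace because superlevel sets of an order function
are subspaces (`orderLevel`), and it is proper because the minimum is attained. Since `ℂ` is
infinite, `J(v)` is not a finite union of proper subspaces
(`Subspace.biUnion_ne_univ_of_top_notMem`), so some element of `J(v)` attains every `w i` at once.
-/

/-- The multi-index filtration associated to a collection `ν i` of order functions:
`J(v) = {g : ν_i(g) ≥ v_i for all i}`. -/
def multiFiltration {r : ℕ} {V : Type*} [AddCommGroup V] [Module ℂ V]
    (ν : Fin r → V → ℕ∞) (v : Fin r → ℕ) : Set V :=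
  {g : V | ∀ i, (v i : ℕ∞) ≤ ν i g}

/-- The set of values of the collection of order functions `ν i`. -/
def valueSet {r : ℕ} {V : Type*} [AddCommGroup V] [Module ℂ V]
    (ν : Fin r → V → ℕ∞) : Set (Fin r → ℕ) :=
  {v | ∃ g : V, ∀ i, ν i g = (v i : ℕ∞)}

/-- The superlevel set `{g : n ≤ μ g}` of an order function `μ`, as a linear subspace. -/
def orderLevel {V : Type*} [AddCommGroup V] [Module ℂ V] (μ : V → ℕ∞)
    (hsmul : ∀ (c : ℂ) (g : V), c ≠ 0 → μ (c • g) = μ g) (hzero : μ 0 = ⊤)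
    (hadd : ∀ g₁ g₂ : V, min (μ g₁) (μ g₂) ≤ μ (g₁ + g₂)) (n : ℕ∞) : Submodule ℂ V where
  carrier := {g | n ≤ μ g}
  add_mem' {a b} ha hb := (le_min ha hb).trans (hadd a b)
  zero_mem' := by simp [hzero]
  smul_mem' c g hg := by
    rcases eq_or_ne c 0 with rfl | hc
    · simp [hzero]
    · simpa [hsmul c g hc] using hg

/-- If `J(v)` contains an element with all values finite, then the
componentwise minimum `w` of the values on `J(v)` is attained simultaneously by a
single element; moreover `w ≥ v`, `w` belongs to the set of values `S`, and
`J(w) = J(v)`. -/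
theorem min_values_attained_on_filtration
    {r : ℕ} {V : Type*} [AddCommGroup V] [Module ℂ V]
    (ν : Fin r → V → ℕ∞)
    (hsmul : ∀ i, ∀ (c : ℂ) (g : V), c ≠ 0 → ν i (c • g) = ν i g)
    (hzero : ∀ i, ν i 0 = ⊤)
    (hadd : ∀ i, ∀ g₁ g₂ : V, min (ν i g₁) (ν i g₂) ≤ ν i (g₁ + g₂))
    (v : Fin r → ℕ)
    (hg₀ : ∃ g₀ ∈ multiFiltration ν v, ∀ i, ν i g₀ ≠ ⊤) :
    ∃ w : Fin r → ℕ,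
      (∀ i, (w i : ℕ∞) = sInf {m : ℕ∞ | ∃ g ∈ multiFiltration ν v, ν i g = m}) ∧
      (∀ i, v i ≤ w i) ∧
      (∃ g ∈ multiFiltration ν v, ∀ i, ν i g = (w i : ℕ∞)) ∧
      w ∈ valueSet ν ∧
      multiFiltration ν w = multiFiltration ν v := by
  obtain ⟨g₀, hg₀, hfin⟩ := hg₀
  -- `ℕ∞` is well-ordered, so the infimum of the values on `J(v)` is attained.
  have hmin : ∀ i, ∃ g ∈ multiFiltration ν v,
      ν i g = sInf {m : ℕ∞ | ∃ g ∈ multiFiltration ν v, ν i g = m} := fun i =>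
    csInf_mem (s := {m : ℕ∞ | ∃ g ∈ multiFiltration ν v, ν i g = m}) ⟨_, g₀, hg₀, rfl⟩
  have hle : ∀ i, ∀ g ∈ multiFiltration ν v,
      sInf {m : ℕ∞ | ∃ g ∈ multiFiltration ν v, ν i g = m} ≤ ν i g :=
    fun i g hg => sInf_le ⟨g, hg, rfl⟩
  have hw : ∀ i, ∃ n : ℕ, (n : ℕ∞) = sInf {m : ℕ∞ | ∃ g ∈ multiFiltration ν v, ν i g = m} :=
    fun i => ENat.ne_top_iff_exists.mp (ne_top_of_le_ne_top (hfin i) (hle i g₀ hg₀))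
  choose w hw using hw
  simp only [← hw] at hmin hle
  have hvw : ∀ i, v i ≤ w i := fun i => by
    obtain ⟨g, hg, hgi⟩ := hmin i
    exact_mod_cast hgi ▸ hg i
  let U (i : Fin r) (n : ℕ∞) : Submodule ℂ V :=
    orderLevel (ν i) (hsmul i) (hzero i) (hadd i) n
  let J : Submodule ℂ V := ⨅ i, U i (v i)
  have hJ : ∀ g, g ∈ J ↔ g ∈ multiFiltration ν v := fun g => Submodule.mem_iInf _
  let P (i : Fin r) : Submodule ℂ J := (U i (w i + 1)).comap J.subtype
  have hP : ∀ i (x : J), x ∈ P i ↔ (w i : ℕ∞) + 1 ≤ ν i x := fun i x => Iff.rfl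
  have hproper : ⊤ ∉ Finset.univ.image P := by
    intro h
    obtain ⟨i, -, hi⟩ := Finset.mem_image.mp h
    obtain ⟨g, hg, hgi⟩ := hmin i
    have hx : (⟨g, (hJ g).2 hg⟩ : J) ∈ P i := hi ▸ Submodule.mem_top
    rw [hP, ENat.add_one_le_iff (ENat.natCast_ne_top _)] at hx
    exact hx.ne' hgi
  obtain ⟨x, hx⟩ := (Set.ne_univ_iff_exists_notMem _).mp
    (Subspace.biUnion_ne_univ_of_top_notMem hproper)
  have hxJ : (x : V) ∈ multiFiltration ν v := (hJ x).1 x.2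
  have hxw : ∀ i, ν i x = w i := fun i => by
    refine le_antisymm ?_ (hle i x hxJ)
    by_contra! hlt
    refine hx (Set.mem_biUnion (Finset.mem_coe.2 (Finset.mem_image_of_mem P (Finset.mem_univ i))) ?_)
    exact (hP i x).2 ((ENat.add_one_le_iff (ENat.natCast_ne_top _)).2 hlt)
  refine ⟨w, hw, hvw, ⟨x, hxJ, hxw⟩, ⟨x, hxw⟩, Set.Subset.antisymm ?_ ?_⟩
  · exact fun g hg i => (Nat.cast_le.2 (hvw i)).trans (hg i)
  · exact fun g hg i => hle i g hg
end

section
/- Let ν₁,…,ν_r be order functions on a ℂ-vector space V with values in ℕ, with associated multi-index filtration J(v) and Hilbert function h(v) = dim_ℂ V/J(v), and assume h(v) < ∞ for all v ∈ ℕ^r. Let S = {v ∈ ℕ^r : ∃ g ∈ V with ν_i(g) = v_i for all i}. Then for every v ∈ ℕ^r such that the set {w ∈ S : w ≥ v} is nonempty, one has h(v) = min{h(w) : w ∈ S, w ≥ v}, and this minimum is attained. (In particular, the Hilbert function is determined by S together with its restriction to S.) -/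
/-- If all codimensions are finite, then for any `v` such that some
element of the value set `S` lies above `v`, the Hilbert function satisfies
`h(v) = min {h(w) : w ∈ S, w ≥ v}`, the minimum being attained. -/
theorem hilbert_function_determined_on_valueSet
    {r : ℕ} {V : Type*} [AddCommGroup V] [Module ℂ V]
    (ν : Fin r → V → ℕ∞)
    (hsmul : ∀ i, ∀ (c : ℂ) (g : V), c ≠ 0 → ν i (c • g) = ν i g)
    (hzero : ∀ i, ν i 0 = ⊤)
    (hadd : ∀ i, ∀ g₁ g₂ : V, min (ν i g₁) (ν i g₂) ≤ ν i (g₁ + g₂))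
    (J : (Fin r → ℕ) → Submodule ℂ V)
    (hJ : ∀ v, (J v : Set V) = multiFiltration ν v)
    (hfin : ∀ v, FiniteDimensional ℂ (V ⧸ J v))
    (v : Fin r → ℕ)
    (hnon : ∃ w ∈ valueSet ν, ∀ i, v i ≤ w i) :
    ∃ w ∈ valueSet ν, (∀ i, v i ≤ w i) ∧
      Module.finrank ℂ (V ⧸ J v) = Module.finrank ℂ (V ⧸ J w) ∧
      ∀ w' ∈ valueSet ν, (∀ i, v i ≤ w' i) →
        Module.finrank ℂ (V ⧸ J w) ≤ Module.finrank ℂ (V ⧸ J w') := by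
  have mem : ∀ u g, g ∈ J u ↔ ∀ i, (u i : ℕ∞) ≤ ν i g := fun u g => by
    rw [← SetLike.mem_coe, hJ]; rfl
  have anti : ∀ u u' : Fin r → ℕ, (∀ i, u i ≤ u' i) → J u' ≤ J u := fun u u' h g hg =>
    (mem u g).2 fun i => (Nat.cast_le.2 (h i)).trans ((mem u' g).1 hg i)
  obtain ⟨w₀, ⟨g₀, hg₀⟩, hw₀⟩ := hnon
  have hex : ∀ i, ∃ n : ℕ, ∃ g ∈ J v, ν i g = n := fun i =>
    ⟨w₀ i, g₀, (mem v g₀).2 fun k => by rw [hg₀ k]; exact Nat.cast_le.2 (hw₀ k), hg₀ i⟩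
  -- `w i` is the minimum of `ν i` on `J v`, attained at some element of `J v`.
  have hmin : ∀ i, ∃ n : ℕ, (∃ g ∈ J v, ν i g = n) ∧ ∀ g ∈ J v, (n : ℕ∞) ≤ ν i g := by
    classical
    intro i
    refine ⟨Nat.find (hex i), Nat.find_spec (hex i), fun g hg => ?_⟩
    cases hν : ν i g with
    | top => exact le_top
    | coe m => exact Nat.cast_le.2 (Nat.find_min' (hex i) ⟨g, hg, hν⟩)
  choose w hw hwle using hmin
  have hvw : ∀ i, v i ≤ w i := fun i => by
    obtain ⟨g, hg, hgi⟩ := hw i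
    have h := (mem v g).1 hg i
    rw [hgi] at h
    exact Nat.cast_le.1 h
  have hJvw : J w = J v :=
    le_antisymm (anti v w hvw) fun g hg => (mem w g).2 fun i => hwle i g hg
  -- The elements of `J v` at which `ν i` exceeds its minimum form a proper subspace.
  let U : Fin r → Submodule ℂ (J v) := fun i =>
    (J (Function.update w i (w i + 1))).comap (J v).subtype
  have memU : ∀ i (g : J v), g ∈ U i ↔ ((w i + 1 : ℕ) : ℕ∞) ≤ ν i g := fun i g => by
    simp only [U, Submodule.mem_comap, Submodule.subtype_apply, mem]
    constructor
    · intro h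
      simpa using h i
    · intro h k
      by_cases hk : k = i
      · subst hk
        simpa using h
      · rw [Function.update_of_ne hk]
        exact hwle k g g.2
  have hU : ∃ g : J v, ∀ i, g ∉ U i := by
    by_contra! hcon
    obtain ⟨i, hi⟩ := Subspace.exists_eq_top_of_iUnion_eq_univ (p := U)
      (Set.eq_univ_of_forall fun g => Set.mem_iUnion.2 (hcon g))
    obtain ⟨g, hg, hgi⟩ := hw i
    have h := (memU i ⟨g, hg⟩).1 (hi ▸ Submodule.mem_top)
    rw [hgi] at h
    exact absurd (Nat.cast_le.1 h) (by omega)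
  obtain ⟨g, hg⟩ := hU
  refine ⟨w, ⟨g, fun i => le_antisymm ?_ (hwle i g g.2)⟩, hvw, by rw [hJvw], fun w' _ hw' => ?_⟩
  · have h := hg i
    rw [memU, not_le] at h
    exact Order.le_of_lt_add_one (by simpa using h)
  · rw [hJvw]
    exact LinearMap.finrank_le_finrank_of_surjective
      (Submodule.factor_surjective (anti v w' hw'))
end

section
/- Let ν₁,…,ν_r be order functions on a ℂ-vector space V with values in ℕ, with associated multi-index filtration J(v). For I ⊆ {1,…,r} and v ∈ ℕ^r let J^{+I}(v) = {g ∈ J(v) : ν_i(g) > v_i for all i ∈ I}, and let 1_I ∈ ℕ^r be the indicator vector of I (with i-th entry 1 if i ∈ I and 0 otherwise). Then J^{+I}(v) = J(v + 1_I). Consequently, if all codimensions are finite, then d_I(v) := dim_ℂ J^{+I}(v)/J^{+}(v) = h(v+1) − h(v+1_I), where 1 = (1,…,1), J^{+}(v) = J^{+{1,…,r}}(v) = J(v+1), and h is the Hilbert function; hence every coefficient c_v(q) of the generalized Poincaré series is expressed purely in terms of the Hilbert function h, i.e. the Hilbert function determines the generalized Poincaré series. -/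
/-!
Since the order functions take values in `ℕ ∪ {∞}`, the condition `v i < ν i g` is the same as
`v i + 1 ≤ ν i g`; hence `J^{+I}(v) = J(v + 1_I)` (`plus_eq_shift`), and in particular
`J^{+}(v) = J(v + 1)`. For nested subspaces `B ≤ A` with `V ⧸ B` finite-dimensional, the third
isomorphism theorem gives `dim A/B + dim V/A = dim V/B`
(`finrank_quotient_comap_add_finrank_quotient`). With `A = J^{+I}(v)` and `B = J^{+}(v)` this is
`d_I(v) = h(v + 1) - h(v + 1_I)`, and substituting it in the definition of `c_v(q)` yields the
formula in terms of the Hilbert function.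
-/

open Polynomial LaurentPolynomial

variable {ι V : Type*} [Fintype ι] [DecidableEq ι] [AddCommGroup V] [Module ℂ V]

/-- `d_I(v) = dim_ℂ J^{+I}(v) / J^{+}(v)`, where the subspaces `J^{+I}(v)` are given
by the family `Jp`. -/
noncomputable def dimPlus (Jp : Finset ι → (ι → ℕ) → Submodule ℂ V)
    (I : Finset ι) (v : ι → ℕ) : ℕ :=
  Module.finrank ℂ
    (↥(Jp I v) ⧸ (Submodule.comap (Jp I v).subtype (Jp Finset.univ v)))

/-- The polynomial `p_v(x) = Σ_{I} (−1)^{#I}(1 + x + ⋯ + x^{d_I(v)−1})`, the class of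
the projectivized fibre of the extended semigroup. -/
noncomputable def fibreClassPoly (Jp : Finset ι → (ι → ℕ) → Submodule ℂ V)
    (v : ι → ℕ) : Polynomial ℤ :=
  ∑ I : Finset ι, (-1 : Polynomial ℤ) ^ I.card *
    ∑ k ∈ Finset.range (dimPlus Jp I v), X ^ k

/-- The Hilbert function `h(v) = dim_ℂ V/J(v)`. -/
noncomputable def hilbertFn (Jp : Finset ι → (ι → ℕ) → Submodule ℂ V)
    (v : ι → ℕ) : ℕ :=
  Module.finrank ℂ (V ⧸ Jp (∅ : Finset ι) v)

/-- `h⁺(v) = dim_ℂ V/J⁺(v)`. -/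
noncomputable def hilbertFnPlus (Jp : Finset ι → (ι → ℕ) → Submodule ℂ V)
    (v : ι → ℕ) : ℕ :=
  Module.finrank ℂ (V ⧸ Jp (Finset.univ : Finset ι) v)

/-- The coefficient `c_v(q) = q^{h⁺(v)−1} p_v(q^{−1})` of `t^v` in the generalized
Poincaré series, as a Laurent polynomial in `q`. -/
noncomputable def genPoincareCoeff (Jp : Finset ι → (ι → ℕ) → Submodule ℂ V)
    (v : ι → ℕ) : LaurentPolynomial ℤ :=
  T ((hilbertFnPlus Jp v : ℤ) - 1) *
    Polynomial.eval₂ LaurentPolynomial.C (T (-1)) (fibreClassPoly Jp v)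

/-- The defining property of the family `Jp` of subspaces:
`Jp I v = J^{+I}(v) = {g : ν_i(g) ≥ v_i ∀ i, and ν_i(g) > v_i ∀ i ∈ I}`. -/
def IsPlusFiltration (ν : ι → V → ℕ∞)
    (Jp : Finset ι → (ι → ℕ) → Submodule ℂ V) : Prop :=
  ∀ (I : Finset ι) (v : ι → ℕ),
    (Jp I v : Set V) =
      {g : V | (∀ i, (v i : ℕ∞) ≤ ν i g) ∧ ∀ i ∈ I, (v i : ℕ∞) < ν i g}

theorem finrank_quotient_comap_add_finrank_quotient {A B : Submodule ℂ V} (h : B ≤ A)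
    [FiniteDimensional ℂ (V ⧸ B)] :
    Module.finrank ℂ (↥A ⧸ Submodule.comap A.subtype B) + Module.finrank ℂ (V ⧸ A) =
      Module.finrank ℂ (V ⧸ B) := by
  have hker : Submodule.comap A.subtype B = LinearMap.ker (B.mkQ.comp A.subtype) := by
    rw [LinearMap.ker_comp, Submodule.ker_mkQ]
  have hrange : LinearMap.range (B.mkQ.comp A.subtype) = A.map B.mkQ := by
    rw [LinearMap.range_comp, Submodule.range_subtype]
  rw [hker, (B.mkQ.comp A.subtype).quotKerEquivRange.finrank_eq, hrange,
    ← (Submodule.quotientQuotientEquivQuotient B A h).finrank_eq, add_comm]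
  exact Submodule.finrank_quotient_add_finrank _

theorem plus_eq_shift {ν : ι → V → ℕ∞} {Jp : Finset ι → (ι → ℕ) → Submodule ℂ V}
    (hJp : IsPlusFiltration ν Jp) (I : Finset ι) (v : ι → ℕ) :
    Jp I v = Jp ∅ (fun i => v i + if i ∈ I then 1 else 0) := by
  apply SetLike.coe_injective
  rw [hJp, hJp]
  ext g
  simp only [Set.mem_ofPred_eq, Finset.notMem_empty, false_imp_iff, implies_true, and_true]
  rw [← forall_and]
  refine forall_congr' fun i => ?_
  by_cases hi : i ∈ I
  · simpa [hi, ENat.add_one_le_iff] using le_of_lt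
  · simp [hi]

theorem plus_univ_eq_shift {ν : ι → V → ℕ∞} {Jp : Finset ι → (ι → ℕ) → Submodule ℂ V}
    (hJp : IsPlusFiltration ν Jp) (v : ι → ℕ) : Jp Finset.univ v = Jp ∅ (v + 1) := by
  rw [plus_eq_shift hJp]
  congr 1
  ext i
  simp

theorem dimPlus_eq_sub {ν : ι → V → ℕ∞} {Jp : Finset ι → (ι → ℕ) → Submodule ℂ V}
    (hJp : IsPlusFiltration ν Jp)
    (hfin : ∀ v : ι → ℕ, FiniteDimensional ℂ (V ⧸ Jp (∅ : Finset ι) v))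
    (I : Finset ι) (v : ι → ℕ) :
    dimPlus Jp I v =
      hilbertFn Jp (v + 1) - hilbertFn Jp (fun i => v i + if i ∈ I then 1 else 0) := by
  have hle : Jp Finset.univ v ≤ Jp I v := by
    rw [← SetLike.coe_subset_coe, hJp, hJp]
    exact fun g hg => ⟨hg.1, fun i _ => hg.2 i (Finset.mem_univ i)⟩
  have : FiniteDimensional ℂ (V ⧸ Jp Finset.univ v) := by
    rw [plus_univ_eq_shift hJp]
    exact hfin _
  have hsum := finrank_quotient_comap_add_finrank_quotient hle
  rw [dimPlus, hilbertFn, hilbertFn, ← plus_eq_shift hJp, ← plus_univ_eq_shift hJp]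
  exact Nat.eq_sub_of_add_eq hsum

/-- `J^{+I}(v) = J(v + 1_I)`; consequently, when all codimensions are
finite, `d_I(v) = h(v+1) − h(v+1_I)`, and each coefficient `c_v(q)` of the
generalized Poincaré series is expressed purely in terms of the Hilbert function:
the Hilbert function determines the generalized Poincaré series. -/
theorem hilbert_determines_genPoincare
    (ν : ι → V → ℕ∞)
    (hsmul : ∀ i, ∀ (c : ℂ) (g : V), c ≠ 0 → ν i (c • g) = ν i g)
    (hzero : ∀ i, ν i 0 = ⊤)
    (hadd : ∀ i, ∀ g₁ g₂ : V, min (ν i g₁) (ν i g₂) ≤ ν i (g₁ + g₂))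
    (Jp : Finset ι → (ι → ℕ) → Submodule ℂ V)
    (hJp : IsPlusFiltration ν Jp)
    (hfin : ∀ v : ι → ℕ, FiniteDimensional ℂ (V ⧸ Jp (∅ : Finset ι) v)) :
    (∀ (I : Finset ι) (v : ι → ℕ),
        Jp I v = Jp ∅ (fun i => v i + if i ∈ I then 1 else 0)) ∧
      (∀ (I : Finset ι) (v : ι → ℕ),
        dimPlus Jp I v =
          hilbertFn Jp (v + 1) -
            hilbertFn Jp (fun i => v i + if i ∈ I then 1 else 0)) ∧
      ∀ v : ι → ℕ,
        genPoincareCoeff Jp v =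
          T ((hilbertFn Jp (v + 1) : ℤ) - 1) *
            Polynomial.eval₂ LaurentPolynomial.C (T (-1))
              (∑ I : Finset ι, (-1 : Polynomial ℤ) ^ I.card *
                ∑ k ∈ Finset.range
                  (hilbertFn Jp (v + 1) -
                    hilbertFn Jp (fun i => v i + if i ∈ I then 1 else 0)),
                  X ^ k) := by
  refine ⟨plus_eq_shift hJp, dimPlus_eq_sub hJp hfin, fun v => ?_⟩
  simp only [genPoincareCoeff, fibreClassPoly, dimPlus_eq_sub hJp hfin]
  rw [hilbertFnPlus, plus_univ_eq_shift hJp, ← hilbertFn]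
end
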